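/- Let C be a nonempty compact convex subset of ℝ^n with diameter D := max_{u,v ∈ C} ‖u − v‖, let Π_C be its orthogonal projection, and define P(z, g, η) := (1/η)(z − Π_C(z − η g)) for η > 0. Let F : ℝ^n → ℝ be differentiable, L-Lipschitz, and with Q-Lipschitz gradient (L, Q > 0), and let η ∈ (0, 2/Q). Then for every z ∈ C, ‖P(z, ∇F(z), η)‖² ≤ L·D / (η − Qη²/2). -/

import Mathlib

/-!
Let `v` be the projected gradient at `z ∈ C` in the direction `g = ∇F(z)`. Testing the variational
inequality of the projection against `z` itself gives `‖v‖² ≤ ⟪g, v⟫`. Cauchy–Schwarz finishes: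
`‖g‖ ≤ L` because `F` is `L`-Lipschitz, and `‖v‖ ≤ D / η` because `η v` is a difference of two
points of `C`. This is the bound `L D / η`, and `η - Q η² / 2 ≤ η`.
-/

section ProjectedGradient

open scoped RealInnerProductSpace Topology

variable {E : Type*} [NormedAddCommGroup E] {C : Set E} {proj : E → E}

/-- `proj` is a metric projection onto `C`: it sends each point of the space to a nearest point
of `C`. Being a predicate, it leaves existence and uniqueness of nearest points aside. -/
structure IsMetricProjection (C : Set E) (proj : E → E) : Prop where
  mem (x : E) : proj x ∈ C
  norm_sub_le (x : E) : ∀ w ∈ C, ‖x - proj x‖ ≤ ‖x - w‖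

theorem IsMetricProjection.norm_sub_eq_iInf (hproj : IsMetricProjection C proj) (x : E) :
    ‖x - proj x‖ = ⨅ w : C, ‖x - w‖ :=
  have hmin : IsMinOn (fun w ↦ ‖x - w‖) C (proj x) := isMinOn_iff.2 (hproj.norm_sub_le x)
  (hmin.iInf_eq (hproj.mem x)).symm

variable [InnerProductSpace ℝ E]

theorem IsMetricProjection.inner_sub_le_zero (hproj : IsMetricProjection C proj)
    (hC : Convex ℝ C) (x : E) {w : E} (hw : w ∈ C) : ⟪x - proj x, w - proj x⟫ ≤ 0 :=
  (norm_eq_iInf_iff_real_inner_le_zero hC (hproj.mem x)).1 (hproj.norm_sub_eq_iInf x) w hw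

/-- The projected gradient `P(z, g, η)` for `η ≠ 0` (it is `0` at `η = 0`): the step of projected
gradient descent moves `z` to `z - η • P(z, g, η)`. The set enters only through its projection. -/
noncomputable def projectedGradient (proj : E → E) (z g : E) (η : ℝ) : E :=
  η⁻¹ • (z - proj (z - η • g))

variable {z g : E} {η : ℝ}

theorem sq_norm_projectedGradient_le_inner (hproj : IsMetricProjection C proj)
    (hC : Convex ℝ C) (hz : z ∈ C) (hη : η ≠ 0) :
    ‖projectedGradient proj z g η‖ ^ 2 ≤ ⟪g, projectedGradient proj z g η⟫ := by
  set v := projectedGradient proj z g η with hv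
  have hstep : z - proj (z - η • g) = η • v := by
    rw [hv, projectedGradient, smul_inv_smul₀ hη]
  have hvar : ⟪η • (v - g), η • v⟫ ≤ 0 := by
    rw [smul_sub, ← hstep, sub_right_comm]
    exact hproj.inner_sub_le_zero hC (z - η • g) hz
  have hinner : ⟪v - g, v⟫ ≤ 0 := by
    rw [real_inner_smul_left, real_inner_smul_right, ← mul_assoc] at hvar
    exact nonpos_of_mul_nonpos_right hvar (mul_self_pos.2 hη)
  rwa [inner_sub_left, real_inner_self_eq_norm_sq, sub_nonpos] at hinner

theorem norm_projectedGradient_le_diam_div (hproj : IsMetricProjection C proj)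
    (hC : Bornology.IsBounded C) (hz : z ∈ C) (hη : 0 < η) :
    ‖projectedGradient proj z g η‖ ≤ Metric.diam C / η := by
  rw [projectedGradient, norm_smul, norm_inv, Real.norm_of_nonneg hη.le, inv_mul_eq_div,
    ← dist_eq_norm]
  gcongr
  exact Metric.dist_le_diam_of_mem hC hz (hproj.mem _)

variable [CompleteSpace E] {F : E → ℝ} {L : ℝ}

theorem norm_le_of_hasGradientAt_of_lip (hg : HasGradientAt F g z) (hL : 0 ≤ L)
    (hF : ∀ᶠ x in 𝓝 z, |F x - F z| ≤ L * ‖x - z‖) : ‖g‖ ≤ L := by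
  simpa only [LinearIsometryEquiv.norm_map] using hg.hasFDerivAt.le_of_lip' hL hF

theorem sq_projected_gradient_le_LD_general (hproj : IsMetricProjection C proj)
    (hconv : Convex ℝ C) (hbdd : Bornology.IsBounded C) (hz : z ∈ C)
    (hg : HasGradientAt F g z) (hL : 0 ≤ L)
    (hF : ∀ᶠ x in 𝓝 z, |F x - F z| ≤ L * ‖x - z‖) (hη : 0 < η) :
    ‖projectedGradient proj z g η‖ ^ 2 ≤ L * Metric.diam C / η :=
  calc ‖projectedGradient proj z g η‖ ^ 2
    _ ≤ ⟪g, projectedGradient proj z g η⟫ :=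
      sq_norm_projectedGradient_le_inner hproj hconv hz hη.ne'
    _ ≤ ‖g‖ * ‖projectedGradient proj z g η‖ := real_inner_le_norm _ _
    _ ≤ L * (Metric.diam C / η) := by
      gcongr
      · exact norm_le_of_hasGradientAt_of_lip hg hL hF
      · exact norm_projectedGradient_le_diam_div hproj hbdd hz hη
    _ = L * Metric.diam C / η := (mul_div_assoc _ _ _).symm

end ProjectedGradient

theorem div_le_div_sub_mul_sq_div_two {a Q η : ℝ} (ha : 0 ≤ a) (hQ : 0 < Q) (hη : 0 < η)
    (hηQ : η < 2 / Q) : a / η ≤ a / (η - Q * η ^ 2 / 2) := by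
  have hpos : 0 < η - Q * η ^ 2 / 2 := by
    have : 0 < η * (2 - η * Q) := mul_pos hη (sub_pos.2 ((lt_div_iff₀ hQ).1 hηQ))
    linarith
  exact div_le_div_of_nonneg_left ha hpos (sub_le_self _ (by positivity))

/-- uniform bound on the squared projected gradient over a compact convex
set of diameter `D`, for an `L`-Lipschitz function with `Q`-Lipschitz gradient and
`η ∈ (0, 2/Q)`. -/
theorem sq_projected_gradient_le_LD {n : ℕ}
    (C : Set (EuclideanSpace ℝ (Fin n))) (hne : C.Nonempty) (hcpt : IsCompact C)
    (hcv : Convex ℝ C)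
    (D : ℝ) (hD : D = Metric.diam C)
    (proj : EuclideanSpace ℝ (Fin n) → EuclideanSpace ℝ (Fin n))
    (hprojmem : ∀ x, proj x ∈ C)
    (hprojnear : ∀ x, ∀ w ∈ C, ‖x - proj x‖ ≤ ‖x - w‖)
    (F : EuclideanSpace ℝ (Fin n) → ℝ) (hF : Differentiable ℝ F)
    (L Q : ℝ) (hL : 0 < L) (hQ : 0 < Q)
    (hFLip : ∀ x y, |F x - F y| ≤ L * ‖x - y‖)
    (hgradLip : ∀ x y, ‖gradient F x - gradient F y‖ ≤ Q * ‖x - y‖)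
    (η : ℝ) (hη : 0 < η) (hη2 : η < 2 / Q) :
    ∀ z ∈ C, ‖η⁻¹ • (z - proj (z - η • gradient F z))‖ ^ 2
      ≤ L * D / (η - Q * η ^ 2 / 2) := by
  subst hD
  exact fun z hz ↦ (sq_projected_gradient_le_LD_general ⟨hprojmem, hprojnear⟩ hcv hcpt.isBounded hz
    (hF z).hasGradientAt hL.le (.of_forall (hFLip · z)) hη).trans
      (div_le_div_sub_mul_sq_div_two (mul_nonneg hL.le Metric.diam_nonneg) hQ hη hη2)
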